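/- arXiv:1708.09263 — 2 statements merged into one kernel-verified Lean document; each statement's English description precedes it below -/
import Mathlib

section
/- Let (Ω, 𝓕, μ) be a probability space. Let N be a map from real-valued measurable functions on Ω to [0, ∞], and define the associate functional N'(h) := sup { ∫_Ω |g h| dμ : N(g) ≤ 1 }. Assume: (i) for every measurable u, N(u) = sup { ∫_Ω u h dμ : N'(h) ≤ 1 } (the Lorentz–Luxemburg duality representation); and (ii) for all measurable u, v, ∫_0^∞ u*(t) v*(t) dt ≤ N(u) · N'(v) (Hölder's inequality via decreasing rearrangements). Then for all real-valued bounded measurable f, g on Ω, N(fg − (fg)_Ω) ≤ ‖f‖_∞ · N(g − g_Ω) + ‖g‖_∞ · N(f − f_Ω). -/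
open MeasureTheory ENNReal

/-- The decreasing rearrangement `f*` of a measurable function `f`:
`f*(t) = inf { s ≥ 0 : μ({x : |f(x)| > s}) ≤ t }`, with values in `[0, ∞]`. -/
noncomputable def decRearr {Ω : Type*} [MeasurableSpace Ω] (μ : Measure Ω)
    (f : Ω → ℝ) (t : ℝ) : ℝ≥0∞ :=
  sInf {s : ℝ≥0∞ | μ {x | s < ENNReal.ofReal |f x|} ≤ ENNReal.ofReal t}

section Rearrangement

variable {Ω : Type*} [MeasurableSpace Ω] {μ : Measure Ω}

lemma volume_distribution_le_decRearr (f : Ω → ℝ) (u : ℝ) :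
    volume.restrict (Set.Ioi 0) {s : ℝ | ENNReal.ofReal u < μ {x | s < |f x|}} ≤
      decRearr μ f u := by
  rcases eq_or_ne (decRearr μ f u) ⊤ with h | h
  · rw [h]; exact le_top
  · rw [Measure.restrict_apply' measurableSet_Ioi]
    have hsub : {s : ℝ | ENNReal.ofReal u < μ {x | s < |f x|}} ∩ Set.Ioi 0 ⊆
        Set.Ioc 0 (decRearr μ f u).toReal := by
      rintro s ⟨hs, hs0⟩
      have hs0' : 0 < s := hs0
      refine ⟨hs0, (ENNReal.ofReal_le_iff_le_toReal h).1 (le_sInf fun t ht => ?_)⟩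
      by_contra! hlt
      have hmono : μ {x | s < |f x|} ≤ μ {x | t < ENNReal.ofReal |f x|} := by
        exact measure_mono fun x hx =>
          hlt.trans ((ENNReal.ofReal_lt_ofReal_iff_of_nonneg hs0'.le).2 hx)
      exact absurd (hmono.trans ht) (not_le.2 hs)
    refine (measure_mono hsub).trans ?_
    rw [Real.volume_Ioc, sub_zero, ENNReal.ofReal_toReal h]

lemma le_volume_ofReal_lt {a : ℝ≥0∞} (ha : a ≠ ⊤) :
    a ≤ volume.restrict (Set.Ioi 0) {u : ℝ | ENNReal.ofReal u < a} := by
  rw [Measure.restrict_apply' measurableSet_Ioi]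
  calc a = volume (Set.Ioo 0 a.toReal) := by
        rw [Real.volume_Ioo, sub_zero, ENNReal.ofReal_toReal ha]
    _ ≤ volume ({u : ℝ | ENNReal.ofReal u < a} ∩ Set.Ioi 0) := measure_mono fun u hu =>
        ⟨(ENNReal.ofReal_lt_iff_lt_toReal hu.1.le ha).2 hu.2, hu.1⟩

lemma measurable_distribution (f : Ω → ℝ) : Measurable fun s : ℝ => μ {x | s < |f x|} :=
  Antitone.measurable fun _ _ hst => measure_mono fun _ hx => lt_of_le_of_lt hst hx

lemma lintegral_min_distribution_le [IsFiniteMeasure μ] (G H : Ω → ℝ) :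
    ∫⁻ p, min (μ {x | p.1 < |G x|}) (μ {x | p.2 < |H x|})
        ∂((volume.restrict (Set.Ioi (0 : ℝ))).prod (volume.restrict (Set.Ioi (0 : ℝ)))) ≤
      ∫⁻ u in Set.Ioi (0 : ℝ), decRearr μ G u * decRearr μ H u := by
  set l : Measure ℝ := volume.restrict (Set.Ioi 0)
  let E : Set (ℝ × (ℝ × ℝ)) := {z | ENNReal.ofReal z.1 < μ {x | z.2.1 < |G x|} ∧
    ENNReal.ofReal z.1 < μ {x | z.2.2 < |H x|}}
  have hE : MeasurableSet E := by
    refine (measurableSet_lt (ENNReal.measurable_ofReal.comp measurable_fst) ?_).inter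
      (measurableSet_lt (ENNReal.measurable_ofReal.comp measurable_fst) ?_)
    · exact (measurable_distribution G).comp (measurable_fst.comp measurable_snd)
    · exact (measurable_distribution H).comp (measurable_snd.comp measurable_snd)
  calc _ ≤ ∫⁻ p, l ((fun u => (u, p)) ⁻¹' E) ∂(l.prod l) := by
        refine lintegral_mono fun p => ?_
        refine (le_volume_ofReal_lt (ne_top_of_le_ne_top (measure_ne_top μ _)
          (min_le_left _ _))).trans (measure_mono fun u hu => ?_)
        exact lt_min_iff.1 hu
    _ = (l.prod (l.prod l)) E := (Measure.prod_apply_symm hE).symm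
    _ = ∫⁻ u, (l.prod l) (Prod.mk u ⁻¹' E) ∂l := Measure.prod_apply hE
    _ ≤ _ := by
        refine lintegral_mono fun u => ?_
        have : Prod.mk u ⁻¹' E = {s : ℝ | ENNReal.ofReal u < μ {x | s < |G x|}} ×ˢ
            {s : ℝ | ENNReal.ofReal u < μ {x | s < |H x|}} := rfl
        rw [this, Measure.prod_prod]
        exact mul_le_mul' (volume_distribution_le_decRearr G u)
          (volume_distribution_le_decRearr H u)

/-- A Hardy–Littlewood inequality for couplings: if both marginals of `π` are dominated by
`C • μ`, then `∫ |G(x) H(y)| dπ(x, y) ≤ C ∫ G* H*`. -/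
lemma lintegral_mul_le_of_marginals_le [IsFiniteMeasure μ] (π : Measure (Ω × Ω)) [SFinite π]
    {C : ℝ≥0∞} (hfst : ∀ P, MeasurableSet P → π (Prod.fst ⁻¹' P) ≤ C * μ P)
    (hsnd : ∀ Q, MeasurableSet Q → π (Prod.snd ⁻¹' Q) ≤ C * μ Q)
    {G H : Ω → ℝ} (hG : Measurable G) (hH : Measurable H) :
    ∫⁻ z, ENNReal.ofReal |G z.1| * ENNReal.ofReal |H z.2| ∂π ≤
      C * ∫⁻ u in Set.Ioi (0 : ℝ), decRearr μ G u * decRearr μ H u := by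
  set l : Measure ℝ := volume.restrict (Set.Ioi 0) with hl
  let E : Set ((Ω × Ω) × (ℝ × ℝ)) := {z | z.2.1 < |G z.1.1| ∧ z.2.2 < |H z.1.2|}
  have hE : MeasurableSet E := by
    refine (measurableSet_lt (measurable_fst.comp measurable_snd) ?_).inter
      (measurableSet_lt (measurable_snd.comp measurable_snd) ?_)
    · exact (hG.comp (measurable_fst.comp measurable_fst)).abs
    · exact (hH.comp (measurable_snd.comp measurable_fst)).abs
  have hIio : ∀ r : ℝ, l (Set.Iio r) = ENNReal.ofReal r := fun r => by
    rw [hl, Measure.restrict_apply measurableSet_Iio, Set.inter_comm, Set.Ioi_inter_Iio,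
      Real.volume_Ioo, sub_zero]
  calc _ = ∫⁻ z, (l.prod l) (Prod.mk z ⁻¹' E) ∂π := by
        refine lintegral_congr fun z => ?_
        have : Prod.mk z ⁻¹' E = Set.Iio |G z.1| ×ˢ Set.Iio |H z.2| := rfl
        rw [this, Measure.prod_prod, hIio, hIio]
    _ = (π.prod (l.prod l)) E := (Measure.prod_apply hE).symm
    _ = ∫⁻ p, π ((fun z => (z, p)) ⁻¹' E) ∂(l.prod l) := Measure.prod_apply_symm hE
    _ ≤ ∫⁻ p, C * min (μ {x | p.1 < |G x|}) (μ {x | p.2 < |H x|}) ∂(l.prod l) := by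
        refine lintegral_mono fun p => ?_
        dsimp only
        rw [mul_min]
        refine le_min ?_ ?_
        · exact (measure_mono fun z hz => hz.1).trans
            (hfst _ (measurableSet_lt measurable_const hG.abs))
        · exact (measure_mono fun z hz => hz.2).trans
            (hsnd _ (measurableSet_lt measurable_const hH.abs))
    _ = C * ∫⁻ p, min (μ {x | p.1 < |G x|}) (μ {x | p.2 < |H x|}) ∂(l.prod l) :=
        lintegral_const_mul _ (((measurable_distribution G).comp measurable_fst).min
          ((measurable_distribution H).comp measurable_snd))
    _ ≤ _ := by gcongr; exact lintegral_min_distribution_le G H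

lemma abs_half_add_add_abs_half_sub_le {a b c : ℝ} (ha : |a| ≤ c) (hb : |b| ≤ c) :
    |(a + b) / 2| + |(a - b) / 2| ≤ c := by
  rw [abs_le] at ha hb
  rcases abs_cases ((a + b) / 2) with h | h <;> rcases abs_cases ((a - b) / 2) with h' | h' <;>
    linarith

lemma lintegral_leibniz_kernel_le [IsProbabilityMeasure μ] {f G H : Ω → ℝ} {c : ℝ}
    (hf : Measurable f) (hfc : ∀ᵐ x ∂μ, |f x| ≤ c) (hG : Measurable G) (hH : Measurable H) :
    ∫⁻ z, ENNReal.ofReal |(f z.1 + f z.2) / 2| * (ENNReal.ofReal |G z.1| * ENNReal.ofReal |H z.1|) +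
        ENNReal.ofReal |(f z.1 - f z.2) / 2| * (ENNReal.ofReal |G z.1| * ENNReal.ofReal |H z.2|)
        ∂(μ.prod μ) ≤
      ENNReal.ofReal c * ∫⁻ u in Set.Ioi (0 : ℝ), decRearr μ G u * decRearr μ H u := by
  let w : Ω × Ω → ℝ≥0∞ := fun z => ENNReal.ofReal |(f z.1 + f z.2) / 2|
  let w' : Ω × Ω → ℝ≥0∞ := fun z => ENNReal.ofReal |(f z.1 - f z.2) / 2|
  have hw : Measurable w := by fun_prop
  have hw' : Measurable w' := by fun_prop
  let d : Ω × Ω → Ω × Ω := fun z => (z.1, z.1)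
  have hd : Measurable d := by fun_prop
  let π : Measure (Ω × Ω) :=
    ((μ.prod μ).withDensity w).map d + (μ.prod μ).withDensity w'
  have hsum : ∀ᵐ z ∂(μ.prod μ), w z + w' z ≤ ENNReal.ofReal c := by
    have h1 : ∀ᵐ z ∂(μ.prod μ), |f z.1| ≤ c := Measure.quasiMeasurePreserving_fst.ae hfc
    have h2 : ∀ᵐ z ∂(μ.prod μ), |f z.2| ≤ c := Measure.quasiMeasurePreserving_snd.ae hfc
    filter_upwards [h1, h2] with z h1 h2
    rw [← ENNReal.ofReal_add (abs_nonneg _) (abs_nonneg _)]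
    exact ENNReal.ofReal_le_ofReal (abs_half_add_add_abs_half_sub_le h1 h2)
  have hmarginal : ∀ P, MeasurableSet P →
      (μ.prod μ).withDensity w (Prod.fst ⁻¹' P) + (μ.prod μ).withDensity w' (Prod.fst ⁻¹' P) ≤
        ENNReal.ofReal c * μ P := fun P hP => by
    have hP' : MeasurableSet (Prod.fst ⁻¹' P : Set (Ω × Ω)) := measurable_fst hP
    rw [withDensity_apply _ hP', withDensity_apply _ hP', ← lintegral_add_left hw]
    calc _ ≤ ∫⁻ z in Prod.fst ⁻¹' P, ENNReal.ofReal c ∂(μ.prod μ) :=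
          lintegral_mono_ae (ae_restrict_of_ae hsum)
      _ = _ := by
          rw [setLIntegral_const, ← Set.prod_univ, Measure.prod_prod, measure_univ, mul_one]
  have hfst : ∀ P, MeasurableSet P → π (Prod.fst ⁻¹' P) ≤ ENNReal.ofReal c * μ P :=
    fun P hP => by
      rw [Measure.add_apply, Measure.map_apply hd (measurable_fst hP)]
      exact hmarginal P hP
  have hswap : ∀ Q, MeasurableSet Q → (μ.prod μ).withDensity w' (Prod.snd ⁻¹' Q) =
      (μ.prod μ).withDensity w' (Prod.fst ⁻¹' Q) := fun Q hQ => by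
    rw [withDensity_apply _ (measurable_snd hQ), withDensity_apply _ (measurable_fst hQ),
      ← lintegral_indicator (measurable_snd hQ), ← lintegral_indicator (measurable_fst hQ)]
    refine (lintegral_prod_swap _).symm.trans (lintegral_congr fun z => ?_)
    have : w' z.swap = w' z := by
      change ENNReal.ofReal |(f z.2 - f z.1) / 2| = ENNReal.ofReal |(f z.1 - f z.2) / 2|
      rw [← abs_neg]
      ring_nf
    by_cases hz : z.1 ∈ Q
    · rw [Set.indicator_of_mem (show z.swap ∈ Prod.snd ⁻¹' Q from hz),
        Set.indicator_of_mem (show z ∈ Prod.fst ⁻¹' Q from hz), this]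
    · rw [Set.indicator_of_notMem (show z.swap ∉ Prod.snd ⁻¹' Q from hz),
        Set.indicator_of_notMem (show z ∉ Prod.fst ⁻¹' Q from hz)]
  have hsnd : ∀ Q, MeasurableSet Q → π (Prod.snd ⁻¹' Q) ≤ ENNReal.ofReal c * μ Q :=
    fun Q hQ => by
      rw [Measure.add_apply, Measure.map_apply hd (measurable_snd hQ), hswap Q hQ]
      exact hmarginal Q hQ
  have key := lintegral_mul_le_of_marginals_le π hfst hsnd hG hH
  let p : Ω × Ω → ℝ≥0∞ := fun z => ENNReal.ofReal |G z.1| * ENNReal.ofReal |H z.2|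
  have hGH : Measurable p := by
    have h1 : Measurable fun z : Ω × Ω => |G z.1| := (hG.comp measurable_fst).abs
    have h2 : Measurable fun z : Ω × Ω => |H z.2| := (hH.comp measurable_snd).abs
    fun_prop
  have hπ : ∫⁻ z, p z ∂π = ∫⁻ z, w z * p (d z) + w' z * p z ∂(μ.prod μ) := by
    have hpd : Measurable fun z => p (d z) := hGH.comp hd
    rw [lintegral_add_measure, lintegral_map hGH hd,
      lintegral_withDensity_eq_lintegral_mul _ hw hpd,
      lintegral_withDensity_eq_lintegral_mul _ hw' hGH, ← lintegral_add_left (hw.mul hpd)]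
    rfl
  exact hπ.symm.trans_le key

end Rearrangement

section Bounded

variable {Ω : Type*} [MeasurableSpace Ω] {μ : Measure Ω}

lemma MeasureTheory.MemLp.top_mul_top {u v : Ω → ℝ} (hu : MemLp u ⊤ μ) (hv : MemLp v ⊤ μ) :
    MemLp (fun x => u x * v x) ⊤ μ :=
  MemLp.mul (p := ⊤) (q := ⊤) hv hu

lemma ae_abs_le_toReal_eLpNorm_top {f : Ω → ℝ} (hf : MemLp f ⊤ μ) :
    ∀ᵐ x ∂μ, |f x| ≤ (eLpNorm f ⊤ μ).toReal := by
  rw [eLpNorm_exponent_top]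
  filter_upwards [enorm_ae_le_eLpNormEssSup f μ] with x hx
  have htop : eLpNormEssSup f μ ≠ ⊤ := by
    rw [← eLpNorm_exponent_top]; exact hf.2.ne
  have := ENNReal.toReal_mono htop hx
  simpa using this

variable [IsProbabilityMeasure μ]

lemma ofReal_leibniz_form_le {f G H : Ω → ℝ} (hfm : Measurable f) (hGm : Measurable G)
    (hHm : Measurable H) (hf : MemLp f ⊤ μ) (hG : MemLp G ⊤ μ) (hH : MemLp H ⊤ μ) :
    ENNReal.ofReal ((∫ x, G x * f x * H x ∂μ + (∫ x, G x * H x ∂μ) * ∫ x, f x ∂μ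
        - (∫ x, G x * f x ∂μ) * ∫ x, H x ∂μ + (∫ x, G x ∂μ) * ∫ x, f x * H x ∂μ) / 2) ≤
      eLpNorm f ⊤ μ * ∫⁻ u in Set.Ioi (0 : ℝ), decRearr μ G u * decRearr μ H u := by
  have int {u : Ω → ℝ} (hu : MemLp u ⊤ μ) : Integrable u μ := hu.integrable le_top
  have hGf := hG.top_mul_top hf
  have hGH := hG.top_mul_top hH
  have i1 : Integrable (fun z : Ω × Ω => G z.1 * f z.1 * H z.1 * 1) (μ.prod μ) :=
    (int (hGf.top_mul_top hH)).mul_prod (integrable_const (1 : ℝ))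
  have i2 : Integrable (fun z : Ω × Ω => G z.1 * H z.1 * f z.2) (μ.prod μ) :=
    (int hGH).mul_prod (int hf)
  have i3 : Integrable (fun z : Ω × Ω => G z.1 * f z.1 * H z.2) (μ.prod μ) :=
    (int hGf).mul_prod (int hH)
  have i4 : Integrable (fun z : Ω × Ω => G z.1 * (f z.2 * H z.2)) (μ.prod μ) :=
    (int hG).mul_prod (int (hf.top_mul_top hH))
  have e1 := integral_prod_mul (μ := μ) (ν := μ) (fun x => G x * f x * H x) (fun _ => (1 : ℝ))
  have e2 := integral_prod_mul (μ := μ) (ν := μ) (fun x => G x * H x) f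
  have e3 := integral_prod_mul (μ := μ) (ν := μ) (fun x => G x * f x) H
  have e4 := integral_prod_mul (μ := μ) (ν := μ) G (fun x => f x * H x)
  have hrepr : (∫ x, G x * f x * H x ∂μ + (∫ x, G x * H x ∂μ) * ∫ x, f x ∂μ
        - (∫ x, G x * f x ∂μ) * ∫ x, H x ∂μ + (∫ x, G x ∂μ) * ∫ x, f x * H x ∂μ) / 2 =
      ∫ z, (f z.1 + f z.2) / 2 * (G z.1 * H z.1) - (f z.1 - f z.2) / 2 * (G z.1 * H z.2)
        ∂(μ.prod μ) := by
    rw [← e2, ← e3, ← e4]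
    rw [integral_const, probReal_univ, one_smul, mul_one] at e1
    rw [← e1, ← integral_add i1 i2, ← integral_sub (by exact i1.add i2) i3,
      ← integral_add (by exact (i1.add i2).sub i3) i4, ← integral_div]
    refine integral_congr_ae (ae_of_all _ fun z => ?_)
    ring
  rw [hrepr]
  have hle := lintegral_leibniz_kernel_le hfm (ae_abs_le_toReal_eLpNorm_top hf) hGm hHm
  rw [ENNReal.ofReal_toReal hf.2.ne] at hle
  refine le_trans ?_ hle
  have hmono : ENNReal.ofReal (∫ z, (f z.1 + f z.2) / 2 * (G z.1 * H z.1) -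
      (f z.1 - f z.2) / 2 * (G z.1 * H z.2) ∂(μ.prod μ)) ≤
      ∫⁻ z, ‖(f z.1 + f z.2) / 2 * (G z.1 * H z.1) -
        (f z.1 - f z.2) / 2 * (G z.1 * H z.2)‖ₑ ∂(μ.prod μ) :=
    (ENNReal.ofReal_le_ofReal (le_abs_self _)).trans
      (by rw [← Real.enorm_eq_ofReal_abs]; exact enorm_integral_le_lintegral_enorm _)
  refine hmono.trans (lintegral_mono fun z => ?_)
  refine (enorm_sub_le).trans ?_
  simp only [enorm_mul, Real.enorm_eq_ofReal_abs, le_refl]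

/-- The symmetrised product rule for covariances. -/
lemma ofReal_integral_centered_mul_le {f g h : Ω → ℝ} (hfm : Measurable f) (hgm : Measurable g)
    (hhm : Measurable h) (hf : MemLp f ⊤ μ) (hg : MemLp g ⊤ μ) (hh : MemLp h ⊤ μ) :
    ENNReal.ofReal (∫ x, (f x * g x - ∫ y, f y * g y ∂μ) * h x ∂μ) ≤
      eLpNorm f ⊤ μ * (∫⁻ u in Set.Ioi (0 : ℝ),
        decRearr μ (fun x => g x - ∫ y, g y ∂μ) u * decRearr μ h u) +
      eLpNorm g ⊤ μ * (∫⁻ u in Set.Ioi (0 : ℝ),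
        decRearr μ (fun x => f x - ∫ y, f y ∂μ) u * decRearr μ h u) := by
  have int {u : Ω → ℝ} (hu : MemLp u ⊤ μ) : Integrable u μ := hu.integrable le_top
  set a := ∫ y, f y ∂μ with ha
  set b := ∫ y, g y ∂μ with hb
  have hfc : MemLp (fun x => f x - a) ⊤ μ := hf.sub (memLp_const a)
  have hgc : MemLp (fun x => g x - b) ⊤ μ := hg.sub (memLp_const b)
  have B1 := ofReal_leibniz_form_le hfm (hgm.sub_const b) hhm hf hgc hh
  have B2 := ofReal_leibniz_form_le hgm (hfm.sub_const a) hhm hg hfc hh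
  have center {u v : Ω → ℝ} (c : ℝ) (hu : MemLp u ⊤ μ) (hv : MemLp v ⊤ μ) :
      ∫ x, (u x - c) * v x ∂μ = ∫ x, u x * v x ∂μ - c * ∫ x, v x ∂μ := by
    simp only [sub_mul]
    rw [integral_sub (int (hu.top_mul_top hv)) ((int hv).const_mul c), integral_const_mul]
  have center_one {u : Ω → ℝ} (c : ℝ) (hu : MemLp u ⊤ μ) :
      ∫ x, (u x - c) ∂μ = ∫ x, u x ∂μ - c := by
    rw [integral_sub (int hu) (integrable_const c), integral_const, probReal_univ, one_smul]
  have hsplit : ∫ x, (f x * g x - ∫ y, f y * g y ∂μ) * h x ∂μ =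
      (∫ x, (g x - b) * f x * h x ∂μ + (∫ x, (g x - b) * h x ∂μ) * ∫ x, f x ∂μ
        - (∫ x, (g x - b) * f x ∂μ) * ∫ x, h x ∂μ
        + (∫ x, (g x - b) ∂μ) * ∫ x, f x * h x ∂μ) / 2 +
      (∫ x, (f x - a) * g x * h x ∂μ + (∫ x, (f x - a) * h x ∂μ) * ∫ x, g x ∂μ
        - (∫ x, (f x - a) * g x ∂μ) * ∫ x, h x ∂μ
        + (∫ x, (f x - a) ∂μ) * ∫ x, g x * h x ∂μ) / 2 := by
    have c1 : ∫ x, g x * (f x * h x) ∂μ = ∫ x, f x * g x * h x ∂μ :=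
      integral_congr_ae (ae_of_all _ fun x => by ring)
    have c2 : ∫ x, f x * (g x * h x) ∂μ = ∫ x, f x * g x * h x ∂μ :=
      integral_congr_ae (ae_of_all _ fun x => by ring)
    have c3 : ∫ x, g x * f x ∂μ = ∫ x, f x * g x ∂μ :=
      integral_congr_ae (ae_of_all _ fun x => by ring)
    simp only [mul_assoc (_ - _)]
    rw [center _ (hf.top_mul_top hg) hh, center b hg (hf.top_mul_top hh), center b hg hh,
      center b hg hf, center_one b hg, center a hf (hg.top_mul_top hh), center a hf hh,
      center a hf hg, center_one a hf, c1, c2, c3, ← ha, ← hb]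
    ring
  rw [hsplit]
  exact ENNReal.ofReal_add_le.trans (add_le_add B1 B2)

end Bounded

section Duality

variable {Ω : Type*} [MeasurableSpace Ω] {μ : Measure Ω}

/-- Pairings with a measurable `u` can be tested against bounded measurable functions that are
dominated almost everywhere. -/
lemma ofReal_integral_mul_le_of_forall_bounded {u h : Ω → ℝ} {B : ℝ≥0∞} (hu : Measurable u)
    (hB : ∀ k : Ω → ℝ, Measurable k → MemLp k ⊤ μ → (∀ᵐ x ∂μ, |k x| ≤ |h x|) →
      ENNReal.ofReal (∫ x, u x * k x ∂μ) ≤ B) :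
    ENNReal.ofReal (∫ x, u x * h x ∂μ) ≤ B := by
  by_cases hint : Integrable (fun x => u x * h x) μ
  swap
  · rw [integral_undef hint, ENNReal.ofReal_zero]
    exact zero_le
  set v := hint.1.aemeasurable.mk _
  have hvm : Measurable v := hint.1.aemeasurable.measurable_mk
  have hvae : (fun x => u x * h x) =ᵐ[μ] v := hint.1.aemeasurable.ae_eq_mk
  let k : Ω → ℝ := fun x => v x / u x
  have hkm : Measurable k := hvm.div hu
  have huk : ∀ᵐ x ∂μ, u x * k x = u x * h x ∧ |k x| ≤ |h x| := by
    filter_upwards [hvae] with x hx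
    by_cases h0 : u x = 0
    · simp [k, h0]
    · have : k x = h x := by
        simp only [k]; rw [← hx]; field_simp
      rw [this]
      exact ⟨rfl, le_rfl⟩
  let S : ℕ → Set Ω := fun n => {x | |k x| ≤ n}
  have hS : ∀ n, MeasurableSet (S n) := fun n => measurableSet_le hkm.abs measurable_const
  let t : ℕ → Ω → ℝ := fun n => (S n).indicator k
  have htm : ∀ n, Measurable (t n) := fun n => hkm.indicator (hS n)
  have htk : ∀ n x, |t n x| ≤ |k x| := fun n x => by
    by_cases hx : x ∈ S n
    · simp [t, hx]
    · simp [t, hx]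
  have htb : ∀ n, MemLp (t n) ⊤ μ := fun n => by
    refine memLp_top_of_bound (htm n).aestronglyMeasurable n (ae_of_all _ fun x => ?_)
    by_cases hx : x ∈ S n
    · simp only [t, Set.indicator_of_mem hx]
      exact hx
    · simp [t, hx]
  have hlim : Filter.Tendsto (fun n => ∫ x, u x * t n x ∂μ) Filter.atTop
      (nhds (∫ x, u x * h x ∂μ)) := by
    refine tendsto_integral_of_dominated_convergence (fun x => ‖u x * h x‖)
      (fun n => (hu.mul (htm n)).aestronglyMeasurable) hint.norm (fun n => ?_) ?_
    · filter_upwards [huk] with x hx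
      rw [norm_mul, norm_mul]
      exact mul_le_mul_of_nonneg_left ((htk n x).trans hx.2) (norm_nonneg _)
    · filter_upwards [huk] with x hx
      rw [← hx.1]
      refine tendsto_const_nhds.congr' ?_
      filter_upwards [Filter.eventually_ge_atTop ⌈|k x|⌉₊] with n hn
      have : x ∈ S n := (Nat.le_ceil _).trans (Nat.cast_le.2 hn)
      simp [t, this]
  refine le_of_tendsto ((ENNReal.continuous_ofReal.tendsto _).comp hlim)
    (Filter.Eventually.of_forall fun n => hB (t n) (htm n) (htb n) ?_)
  filter_upwards [huk] with x hx
  exact (htk n x).trans hx.2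

end Duality

/-- Theorem 4.3 (first part), stated with the abstract properties of a rearrangement
invariant norm used in its proof: if `N` satisfies the Lorentz–Luxemburg duality
representation and Hölder's inequality via decreasing rearrangements (with associate
functional `N'(h) = sup {∫ |g h| dμ : N(g) ≤ 1}`), then for bounded measurable real
`f, g` on a probability space,
`N(fg - (fg)_Ω) ≤ ‖f‖_∞ N(g - g_Ω) + ‖g‖_∞ N(f - f_Ω)`. -/
theorem leibniz_rule_rearrangement_invariant_norm
    {Ω : Type*} [MeasurableSpace Ω] (μ : Measure Ω) [IsProbabilityMeasure μ]
    (N N' : (Ω → ℝ) → ℝ≥0∞)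
    (hN' : ∀ h : Ω → ℝ,
      N' h = ⨆ (g : Ω → ℝ) (_ : N g ≤ 1), ∫⁻ x, ENNReal.ofReal |g x * h x| ∂μ)
    (hdual : ∀ u : Ω → ℝ, Measurable u →
      N u = ⨆ (h : Ω → ℝ) (_ : N' h ≤ 1), ENNReal.ofReal (∫ x, u x * h x ∂μ))
    (hHolder : ∀ u v : Ω → ℝ, Measurable u → Measurable v →
      ∫⁻ t in Set.Ioi (0 : ℝ), decRearr μ u t * decRearr μ v t ≤ N u * N' v)
    (f g : Ω → ℝ) (hf : Measurable f) (hg : Measurable g)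
    (hfb : ∃ C : ℝ, ∀ x, |f x| ≤ C) (hgb : ∃ C : ℝ, ∀ x, |g x| ≤ C) :
    N (fun x => f x * g x - ∫ y, f y * g y ∂μ) ≤
      eLpNorm f ⊤ μ * N (fun x => g x - ∫ y, g y ∂μ) +
      eLpNorm g ⊤ μ * N (fun x => f x - ∫ y, f y ∂μ) := by
  have memLp_of_bdd {u : Ω → ℝ} (hu : Measurable u) (hub : ∃ C : ℝ, ∀ x, |u x| ≤ C) :
      MemLp u ⊤ μ :=
    let ⟨C, hC⟩ := hub
    memLp_top_of_bound hu.aestronglyMeasurable C (ae_of_all _ hC)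
  have hfL := memLp_of_bdd hf hfb
  have hgL := memLp_of_bdd hg hgb
  have hum : Measurable fun x => f x * g x - ∫ y, f y * g y ∂μ := (hf.mul hg).sub_const _
  rw [hdual _ hum]
  refine iSup₂_le fun h hh => ofReal_integral_mul_le_of_forall_bounded hum fun k hk hkL hkh => ?_
  have hk1 : N' k ≤ 1 := by
    refine le_trans ?_ hh
    rw [hN' k, hN' h]
    refine iSup₂_mono fun v _ => lintegral_mono_ae ?_
    filter_upwards [hkh] with x hx
    rw [abs_mul, abs_mul]
    exact ENNReal.ofReal_le_ofReal (mul_le_mul_of_nonneg_left hx (abs_nonneg _))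
  have pairing {v : Ω → ℝ} (hv : Measurable v) :
      ∫⁻ t in Set.Ioi (0 : ℝ), decRearr μ v t * decRearr μ k t ≤ N v :=
    (hHolder v k hv hk).trans (mul_le_of_le_one_right' hk1)
  refine (ofReal_integral_centered_mul_le hf hg hk hfL hgL hkL).trans ?_
  gcongr
  · exact pairing (hg.sub_const _)
  · exact pairing (hf.sub_const _)
end

section
/- Let (Ω, 𝓕, μ) be a probability space. Let N be a map from real-valued measurable functions on Ω to [0, ∞], and define the associate functional N'(h) := sup { ∫_Ω |g h| dμ : N(g) ≤ 1 }. Assume that for all measurable u, v one has ∫_Ω |u v| dμ ≤ ∫_0^∞ u*(t) v*(t) dt ≤ N(u) · N'(v) (Hardy–Littlewood and Hölder inequalities via decreasing rearrangements). Then for all real-valued bounded measurable f, g on Ω, ‖fg − (fg)_Ω‖_1 ≤ N(f) · N'(g − g_Ω) + N'(g) · N(f − f_Ω). -/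
open MeasureTheory ENNReal

/-- Layer cake bound: a superlevel set of the distribution function of `f` is no longer than the
decreasing rearrangement of `f`. -/
lemma volume_distribution_gt_le_decRearr {Ω : Type*} [MeasurableSpace Ω] (μ : Measure Ω)
    (f : Ω → ℝ) (r : ℝ) :
    volume.restrict (Set.Ioi (0 : ℝ)) {s | ENNReal.ofReal r < μ {x | s < |f x|}} ≤
      decRearr μ f r := by
  refine le_sInf fun S hS => ?_
  rcases eq_or_ne S ∞ with rfl | hS_top
  · exact le_top
  have hsub : {s | ENNReal.ofReal r < μ {x | s < |f x|}} ⊆ Set.Iio S.toReal := by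
    intro s hs
    by_contra! h
    refine absurd (hs.trans_le (le_trans (measure_mono fun x hx => ?_) hS)) (lt_irrefl _)
    exact (ENNReal.lt_ofReal_iff_toReal_lt hS_top).2 ((not_lt.1 h).trans_lt hx)
  calc volume.restrict (Set.Ioi (0 : ℝ)) {s | ENNReal.ofReal r < μ {x | s < |f x|}}
      ≤ volume.restrict (Set.Ioi (0 : ℝ)) (Set.Iio S.toReal) := measure_mono hsub
    _ = S := by
      rw [Measure.restrict_apply measurableSet_Iio, Set.inter_comm, Set.Ioi_inter_Iio,
        Real.volume_Ioo, sub_zero, ENNReal.ofReal_toReal hS_top]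

lemma volume_ofReal_lt {a : ℝ≥0∞} (ha : a ≠ ∞) :
    volume.restrict (Set.Ioi (0 : ℝ)) {r | ENNReal.ofReal r < a} = a := by
  have h : {r | ENNReal.ofReal r < a} ∩ Set.Ioi (0 : ℝ) = Set.Ioo 0 a.toReal := by
    ext r
    simp only [Set.mem_inter_iff, Set.mem_ofPred_eq, Set.mem_Ioi, Set.mem_Ioo]
    refine ⟨fun ⟨h, hr⟩ => ⟨hr, (ENNReal.ofReal_lt_iff_lt_toReal hr.le ha).1 h⟩,
      fun ⟨hr, h⟩ => ⟨(ENNReal.ofReal_lt_iff_lt_toReal hr.le ha).2 h, hr⟩⟩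
  rw [Measure.restrict_apply (measurableSet_lt ENNReal.measurable_ofReal measurable_const), h,
    Real.volume_Ioo, sub_zero, ENNReal.ofReal_toReal ha]

lemma lintegral_lintegral_min_eq {φ ψ : ℝ → ℝ≥0∞} (hφ : Measurable φ) (hψ : Measurable ψ)
    (hφ_top : ∀ s, φ s ≠ ∞) (ν : Measure ℝ) [SFinite ν] :
    ∫⁻ s, ∫⁻ t, min (φ s) (ψ t) ∂ν ∂ν =
      ∫⁻ r in Set.Ioi (0 : ℝ), ν {s | ENNReal.ofReal r < φ s} *
        ν {t | ENNReal.ofReal r < ψ t} := by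
  have hS (χ : ℝ → ℝ≥0∞) (hχ : Measurable χ) :
      MeasurableSet {p : ℝ × ℝ | ENNReal.ofReal p.2 < χ p.1} :=
    measurableSet_lt (by fun_prop) (by fun_prop)
  obtain ⟨I, hI_eq⟩ : ∃ I : (ℝ → ℝ≥0∞) → ℝ × ℝ → ℝ≥0∞,
      ∀ χ, I χ = {p : ℝ × ℝ | ENNReal.ofReal p.2 < χ p.1}.indicator 1 := ⟨_, fun _ => rfl⟩
  have hI (χ : ℝ → ℝ≥0∞) (hχ : Measurable χ) : Measurable (I χ) :=
    hI_eq χ ▸ measurable_one.indicator (hS χ hχ)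
  have hmin (s t : ℝ) : min (φ s) (ψ t) =
      ∫⁻ r in Set.Ioi (0 : ℝ), I φ (s, r) * I ψ (t, r) := by
    have htop : min (φ s) (ψ t) ≠ ∞ := ne_top_of_le_ne_top (hφ_top s) (min_le_left _ _)
    rw [← volume_ofReal_lt htop, ← lintegral_indicator_one
      (measurableSet_lt ENNReal.measurable_ofReal measurable_const)]
    refine lintegral_congr fun r => ?_
    by_cases h1 : ENNReal.ofReal r < φ s <;> by_cases h2 : ENNReal.ofReal r < ψ t <;>
      simp [hI_eq, Set.indicator, h1, h2]
  have h_int (χ : ℝ → ℝ≥0∞) (hχ : Measurable χ) (r : ℝ) :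
      ∫⁻ t, I χ (t, r) ∂ν = ν {t | ENNReal.ofReal r < χ t} := by
    rw [← lintegral_indicator_one (measurableSet_lt measurable_const hχ), hI_eq]
    rfl
  have hW : Measurable fun r => ν {t | ENNReal.ofReal r < ψ t} := by
    simp_rw [← h_int ψ hψ]
    exact (hI ψ hψ).lintegral_prod_left'
  have hIφ := hI φ hφ
  have hIψ := hI ψ hψ
  calc ∫⁻ s, ∫⁻ t, min (φ s) (ψ t) ∂ν ∂ν
      = ∫⁻ s, (∫⁻ r in Set.Ioi (0 : ℝ), I φ (s, r) * ν {t | ENNReal.ofReal r < ψ t}) ∂ν := by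
        refine lintegral_congr fun s => ?_
        simp_rw [hmin]
        rw [lintegral_lintegral_swap
          (((hIφ.comp (measurable_const.prodMk measurable_snd)).mul hIψ).aemeasurable)]
        refine lintegral_congr fun r => ?_
        rw [← h_int ψ hψ]
        exact lintegral_const_mul _ (hIψ.comp measurable_prodMk_right)
    _ = _ := by
        rw [lintegral_lintegral_swap ((hIφ.mul (hW.comp measurable_snd)).aemeasurable)]
        refine lintegral_congr fun r => ?_
        rw [← h_int φ hφ]
        exact lintegral_mul_const _ (hIφ.comp measurable_prodMk_right)

/-- Hardy–Littlewood inequality for a coupling `κ` of a finite measure `μ` with itself. -/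
lemma lintegral_coupling_le_decRearr {Ω : Type*} [MeasurableSpace Ω] {μ : Measure Ω}
    [IsFiniteMeasure μ] {κ : Measure (Ω × Ω)} (h_fst : κ.map Prod.fst = μ)
    (h_snd : κ.map Prod.snd = μ) {u v : Ω → ℝ} (hu : Measurable u) (hv : Measurable v) :
    ∫⁻ z, ‖u z.1‖ₑ * ‖v z.2‖ₑ ∂κ ≤
      ∫⁻ t in Set.Ioi (0 : ℝ), decRearr μ u t * decRearr μ v t := by
  have hmeas (w : Ω → ℝ) : Measurable fun s : ℝ => μ {x | s < |w x|} :=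
    Antitone.measurable fun s t hst => measure_mono fun x hx => lt_of_le_of_lt hst hx
  have hU (s : ℝ) : MeasurableSet {z : Ω × Ω | s < |u z.1|} :=
    measurableSet_lt (by fun_prop) (by fun_prop)
  have hV (s : ℝ) : MeasurableSet {z : Ω × Ω | s < |v z.2|} :=
    measurableSet_lt (by fun_prop) (by fun_prop)
  have hcake (w : Ω × Ω → ℝ) (hw : Measurable w) (ρ : Measure (Ω × Ω)) :
      ∫⁻ z, ‖w z‖ₑ ∂ρ = ∫⁻ s in Set.Ioi (0 : ℝ), ρ {z | s < |w z|} := by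
    simp_rw [← ofReal_norm, Real.norm_eq_abs]
    exact lintegral_eq_lintegral_meas_lt ρ (.of_forall fun _ => abs_nonneg _) (by fun_prop)
  calc ∫⁻ z, ‖u z.1‖ₑ * ‖v z.2‖ₑ ∂κ
      = ∫⁻ z, ‖u z.1‖ₑ ∂(κ.withDensity fun z => ‖v z.2‖ₑ) := by
        rw [lintegral_withDensity_eq_lintegral_mul _ (by fun_prop) (by fun_prop)]
        simp [mul_comm]
    _ = ∫⁻ s in Set.Ioi (0 : ℝ), ∫⁻ t in Set.Ioi (0 : ℝ),
          κ ({z | t < |v z.2|} ∩ {z | s < |u z.1|}) := by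
        rw [hcake (fun z => u z.1) (by fun_prop)]
        refine lintegral_congr fun s => ?_
        rw [withDensity_apply _ (hU s), hcake (fun z => v z.2) (by fun_prop)]
        refine lintegral_congr fun t => ?_
        rw [Measure.restrict_apply (hV t)]
    _ ≤ ∫⁻ s in Set.Ioi (0 : ℝ), ∫⁻ t in Set.Ioi (0 : ℝ),
          min (μ {x | s < |u x|}) (μ {x | t < |v x|}) := by
        refine lintegral_mono fun s => lintegral_mono fun t => le_min ?_ ?_
        · refine (measure_mono Set.inter_subset_right).trans (le_of_eq ?_)
          rw [← h_fst, Measure.map_apply measurable_fst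
            (measurableSet_lt (by fun_prop) (by fun_prop))]
          rfl
        · refine (measure_mono Set.inter_subset_left).trans (le_of_eq ?_)
          rw [← h_snd, Measure.map_apply measurable_snd
            (measurableSet_lt (by fun_prop) (by fun_prop))]
          rfl
    _ = _ := lintegral_lintegral_min_eq (hmeas u) (hmeas v) (fun _ => measure_ne_top _ _) _
    _ ≤ _ := lintegral_mono fun r => mul_le_mul'
        (volume_distribution_gt_le_decRearr μ u r) (volume_distribution_gt_le_decRearr μ v r)

/-- The coupling of a probability measure `μ` with itself that mixes, on each of `A` and `Aᶜ`, the
diagonal and the product coupling. -/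
noncomputable def blockCoupling {Ω : Type*} [MeasurableSpace Ω] (μ : Measure Ω) (A : Set Ω) :
    Measure (Ω × Ω) :=
  (μ Aᶜ • (μ.restrict A).map (fun x => (x, x)) + (μ.restrict A).prod (μ.restrict A)) +
  (μ A • (μ.restrict Aᶜ).map (fun x => (x, x)) + (μ.restrict Aᶜ).prod (μ.restrict Aᶜ))

lemma map_blockCoupling {Ω : Type*} [MeasurableSpace Ω] {μ : Measure Ω}
    [IsProbabilityMeasure μ] {A : Set Ω} (hA : MeasurableSet A) :
    (blockCoupling μ A).map Prod.fst = μ ∧ (blockCoupling μ A).map Prod.snd = μ := by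
  have hsum : μ A + μ Aᶜ = 1 := prob_add_prob_compl hA
  have key : (μ Aᶜ • μ.restrict A + μ A • μ.restrict A) +
      (μ A • μ.restrict Aᶜ + μ Aᶜ • μ.restrict Aᶜ) = μ := by
    rw [← add_smul, ← add_smul, add_comm (μ Aᶜ), hsum, one_smul, one_smul,
      Measure.restrict_add_restrict_compl hA]
  have h_diag : Measurable fun x : Ω => (x, x) := by fun_prop
  constructor
  · simpa [blockCoupling, Measure.map_add _ _ measurable_fst, Measure.map_smul,
      Measure.map_map measurable_fst h_diag, Function.comp_def] using key
  · simpa [blockCoupling, Measure.map_add _ _ measurable_snd, Measure.map_smul,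
      Measure.map_map measurable_snd h_diag, Function.comp_def] using key

lemma enorm_block_le_decRearr {Ω : Type*} [MeasurableSpace Ω] {μ : Measure Ω}
    [IsProbabilityMeasure μ] {A : Set Ω} (hA : MeasurableSet A) {u v : Ω → ℝ}
    (hu : Measurable u) (hv : Measurable v) :
    ‖(μ.real Aᶜ * ∫ x in A, u x * v x ∂μ + (∫ x in A, u x ∂μ) * ∫ x in A, v x ∂μ) -
      (μ.real A * ∫ x in Aᶜ, u x * v x ∂μ + (∫ x in Aᶜ, u x ∂μ) * ∫ x in Aᶜ, v x ∂μ)‖ₑ ≤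
      ∫⁻ t in Set.Ioi (0 : ℝ), decRearr μ u t * decRearr μ v t := by
  have hblock (c : ℝ≥0∞) (hc : c ≠ ∞) (B : Set Ω) :
      ‖c.toReal * ∫ x in B, u x * v x ∂μ + (∫ x in B, u x ∂μ) * ∫ x in B, v x ∂μ‖ₑ ≤
        ∫⁻ z, ‖u z.1‖ₑ * ‖v z.2‖ₑ
          ∂(c • (μ.restrict B).map (fun x => (x, x)) + (μ.restrict B).prod (μ.restrict B)) := by
    rw [lintegral_add_measure, lintegral_smul_measure, lintegral_map (by fun_prop) (by fun_prop),
      lintegral_prod_mul (f := fun x => ‖u x‖ₑ) (g := fun x => ‖v x‖ₑ) (by fun_prop) (by fun_prop)]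
    refine (enorm_add_le _ _).trans (add_le_add ?_ ?_)
    · rw [enorm_mul, Real.enorm_of_nonneg ENNReal.toReal_nonneg, ENNReal.ofReal_toReal hc]
      simp_rw [← enorm_mul]
      exact mul_le_mul' le_rfl (enorm_integral_le_lintegral_enorm _)
    · rw [enorm_mul]
      exact mul_le_mul' (enorm_integral_le_lintegral_enorm _) (enorm_integral_le_lintegral_enorm _)
  refine enorm_sub_le.trans ?_
  refine (add_le_add (hblock (μ Aᶜ) (measure_ne_top _ _) A)
    (hblock (μ A) (measure_ne_top _ _) Aᶜ)).trans ?_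
  rw [← lintegral_add_measure]
  exact lintegral_coupling_le_decRearr (map_blockCoupling hA).1 (map_blockCoupling hA).2 hu hv

lemma integral_abs_sub_integral_eq {Ω : Type*} [MeasurableSpace Ω] {μ : Measure Ω}
    [IsProbabilityMeasure μ] {h : Ω → ℝ} (hh : Measurable h) (h_int : Integrable h μ) :
    ∃ A, MeasurableSet A ∧ ∫ x, |h x - ∫ y, h y ∂μ| ∂μ =
      2 * (μ.real Aᶜ * ∫ x in A, h x ∂μ - μ.real A * ∫ x in Aᶜ, h x ∂μ) := by
  set m := ∫ y, h y ∂μ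
  have hA : MeasurableSet {x | m < h x} := measurableSet_lt measurable_const hh
  refine ⟨{x | m < h x}, hA, ?_⟩
  set A := {x | m < h x}
  have h_int' : Integrable (fun x => |h x - m|) μ := (h_int.sub (integrable_const m)).abs
  have h1 : ∫ x in A, |h x - m| ∂μ = ∫ x in A, h x ∂μ - μ.real A * m := by
    rw [setIntegral_congr_fun (g := fun x => h x - m) hA fun x hx =>
      abs_of_pos (sub_pos.2 hx), integral_sub h_int.integrableOn (integrable_const m)]
    simp
  have h2 : ∫ x in Aᶜ, |h x - m| ∂μ = μ.real Aᶜ * m - ∫ x in Aᶜ, h x ∂μ := by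
    rw [setIntegral_congr_fun (g := fun x => m - h x) hA.compl fun x hx =>
      (abs_of_nonpos (sub_nonpos.2 (not_lt.1 fun hlt => hx hlt))).trans (neg_sub _ _),
      integral_sub (integrable_const m) h_int.integrableOn]
    simp
  have h3 : m = ∫ x in A, h x ∂μ + ∫ x in Aᶜ, h x ∂μ := (integral_add_compl hA h_int).symm
  rw [← integral_add_compl hA h_int', h1, h2, probReal_compl_eq_one_sub hA]
  linear_combination (1 - 2 * μ.real A) * h3

/-- Theorem 4.3 (second part), stated with the abstract properties of a rearrangement
invariant norm used in its proof: if `N` (with associate functional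
`N'(h) = sup {∫ |g h| dμ : N(g) ≤ 1}`) satisfies the Hardy–Littlewood and Hölder
inequalities via decreasing rearrangements, then for bounded measurable real `f, g`
on a probability space,
`‖fg - (fg)_Ω‖₁ ≤ N(f) N'(g - g_Ω) + N'(g) N(f - f_Ω)`. -/
theorem leibniz_rule_associate_space
    {Ω : Type*} [MeasurableSpace Ω] (μ : Measure Ω) [IsProbabilityMeasure μ]
    (N N' : (Ω → ℝ) → ℝ≥0∞)
    (hN' : ∀ h : Ω → ℝ,
      N' h = ⨆ (g : Ω → ℝ) (_ : N g ≤ 1), ∫⁻ x, ENNReal.ofReal |g x * h x| ∂μ)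
    (hHL : ∀ u v : Ω → ℝ, Measurable u → Measurable v →
      (∫⁻ x, ENNReal.ofReal |u x * v x| ∂μ) ≤
          (∫⁻ t in Set.Ioi (0 : ℝ), decRearr μ u t * decRearr μ v t) ∧
      (∫⁻ t in Set.Ioi (0 : ℝ), decRearr μ u t * decRearr μ v t) ≤ N u * N' v)
    (f g : Ω → ℝ) (hf : Measurable f) (hg : Measurable g)
    (hfb : ∃ C : ℝ, ∀ x, |f x| ≤ C) (hgb : ∃ C : ℝ, ∀ x, |g x| ≤ C) :
    eLpNorm (fun x => f x * g x - ∫ y, f y * g y ∂μ) 1 μ ≤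
      N f * N' (fun x => g x - ∫ y, g y ∂μ) +
      N' g * N (fun x => f x - ∫ y, f y ∂μ) := by
  obtain ⟨C, hC⟩ := hfb
  obtain ⟨D, hD⟩ := hgb
  have hfi : Integrable f μ := .of_bound hf.aestronglyMeasurable C (.of_forall hC)
  have hgi : Integrable g μ := .of_bound hg.aestronglyMeasurable D (.of_forall hD)
  have hfg : Integrable (fun x => f x * g x) μ :=
    hgi.bdd_mul hf.aestronglyMeasurable (.of_forall hC)
  obtain ⟨A, hA, hAeq⟩ := integral_abs_sub_integral_eq (hf.mul hg) hfg
  simp only [Pi.mul_apply] at hAeq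
  set c := ∫ y, f y ∂μ
  set d := ∫ y, g y ∂μ
  have hc' : c = ∫ x in A, f x ∂μ + ∫ x in Aᶜ, f x ∂μ := (integral_add_compl hA hfi).symm
  have hd' : d = ∫ x in A, g x ∂μ + ∫ x in Aᶜ, g x ∂μ := (integral_add_compl hA hgi).symm
  have hsub {w : Ω → ℝ} (hw : Integrable w μ) (e : ℝ) (B : Set Ω) :
      ∫ x in B, (w x - e) ∂μ = ∫ x in B, w x ∂μ - μ.real B * e := by
    rw [integral_sub hw.integrableOn (integrable_const e)]
    simp
  have hmul_right (B : Set Ω) : ∫ x in B, f x * (g x - d) ∂μ =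
      ∫ x in B, f x * g x ∂μ - (∫ x in B, f x ∂μ) * d := by
    simp_rw [mul_sub]
    rw [integral_sub hfg.integrableOn (hfi.mul_const d).integrableOn, integral_mul_const]
  have hmul_left (B : Set Ω) : ∫ x in B, (f x - c) * g x ∂μ =
      ∫ x in B, f x * g x ∂μ - c * ∫ x in B, g x ∂μ := by
    simp_rw [sub_mul]
    rw [integral_sub hfg.integrableOn (hgi.const_mul c).integrableOn, integral_const_mul]
  have hgd : Measurable fun x => g x - d := hg.sub_const d
  have hfc : Measurable fun x => f x - c := hf.sub_const c
  have key_right := (enorm_block_le_decRearr hA hf hgd).trans (hHL _ _ hf hgd).2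
  have key_left := (enorm_block_le_decRearr hA hfc hg).trans (hHL _ _ hfc hg).2
  rw [mul_comm (N' g)]
  refine le_trans (le_of_eq ?_) ((enorm_add_le _ _).trans (add_le_add key_right key_left))
  have h_int : Integrable (fun x => f x * g x - ∫ y, f y * g y ∂μ) μ :=
    hfg.sub (integrable_const _)
  rw [eLpNorm_one_eq_lintegral_enorm, ← ofReal_integral_norm_eq_lintegral_enorm h_int,
    ← Real.enorm_of_nonneg (integral_nonneg fun _ => norm_nonneg _)]
  simp only [Real.norm_eq_abs]
  rw [hAeq, hmul_right, hmul_right, hmul_left, hmul_left, hsub hgi, hsub hgi, hsub hfi, hsub hfi,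
    probReal_compl_eq_one_sub hA, hc', hd']
  congr 1
  ring
end
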